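/- There exist universal constants c > 0 and n₀ such that for all n ≥ n₀, k ≥ n, and α ≥ 10 with s = α/√n, the following holds. Let G be an n×n standard Gaussian random matrix and u, v ∈ ℝⁿ standard Gaussian random vectors, all mutually independent. Run a deterministic t-round adaptive algorithm making k linear measurements per round on the input vec(G) + s·(u⊗v) ∈ ℝ^{n²}, and let Q ∈ ℝ^{tk×n²} be the (random) matrix obtained by stacking all query matrices realized along the run. If t ≤ c·log(n²/k)/(log log n + log α), then Pr[‖Q(u⊗v)‖² ≤ n²/100] ≥ 4/5. -/

import Mathlib

/-!
Follow the energy `‖Q⁽¹⁾x‖² + ⋯ + ‖Q⁽ʲ⁾x‖²` of the plant `x = u ⊗ v` collected in the first `j`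
rounds. Except with small probability it stays below the budget `k (Dʲ - 1)`, where
`D = 1000 (1 + α²)`, hence below `n² / 100` after the permitted number of rounds.

*Transcript density.* The queries of a round are orthogonal to all earlier ones, so on the input
`g + y`, with `g` standard Gaussian and `y` fixed, each round reveals a fresh Gaussian vector
translated by `Q⁽ʲ⁾y`. By the Cameron–Martin formula the responses then have an explicit density
`L y` with respect to independent standard Gaussian responses, the null law.

*One round.* Under the null law the transcript is independent of `(u, v)`, so the next query matrix
is a fixed matrix with `k` orthonormal rows, and `‖Q(u ⊗ v)‖²` exceeds `b` while `‖v‖² ≤ 20 n` with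
probability at most `exp (-(b - 4 k) / (80 n))`. Returning to the true law costs the density, which
has a small second moment while the energy is at most `B`: there `L (s x)² ≤ e^{s² B} L (2 s x)`,
and `L (2 s x)` integrates to one. Hence the next round collects more than
`4 k + 80 n (s² B + 2 e)` with probability at most `e^{-e}`.

*Iteration.* With `e = j + 4` in round `j`, the failure probabilities of the rounds sum to at most
`1 / 8`, and `‖v‖² > 20 n` has probability at most `1 / 16`.
-/

open MeasureTheory ProbabilityTheory Matrix
open scoped ENNReal Classical

noncomputable section

/-- Squared Euclidean norm of a finitely-indexed real vector. -/
def sqNorm {ι : Type*} [Fintype ι] (x : ι → ℝ) : ℝ := ∑ i, x i ^ 2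

/-- Squared Frobenius norm of a real matrix. -/
def frobSq {m n : Type*} [Fintype m] [Fintype n] (A : Matrix m n ℝ) : ℝ :=
  ∑ i, ∑ j, A i j ^ 2

/-- Spectral (ℓ₂ operator) norm of a real matrix. -/
def specNorm {m n : Type*} [Fintype m] [Fintype n] (A : Matrix m n ℝ) : ℝ :=
  sSup ((fun x : n → ℝ => Real.sqrt (sqNorm (A.mulVec x))) '' {x | sqNorm x ≤ 1})

/-- `i`-th largest singular value (1-based), characterized via
`σ_i(A) = min {‖A − X‖ : rank X ≤ i − 1}`. -/
def singVal {m n : Type*} [Fintype m] [Fintype n] (A : Matrix m n ℝ) (i : ℕ) : ℝ :=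
  sInf {c | ∃ X : Matrix m n ℝ, X.rank ≤ i - 1 ∧ c = specNorm (A - X)}

/-- Flattening of an `n × n` matrix into a vector in `ℝ^{n²}`. -/
def vec (n : ℕ) (A : Matrix (Fin n) (Fin n) ℝ) : Fin (n * n) → ℝ :=
  fun i => A (finProdFinEquiv.symm i).1 (finProdFinEquiv.symm i).2

/-- `u ⊗ v = vec (u vᵀ) ∈ ℝ^{n²}`. -/
def tensor {n : ℕ} (u v : Fin n → ℝ) : Fin (n * n) → ℝ :=
  vec n (Matrix.of fun i j => u i * v j)

/-- Standard Gaussian measure on `ι → ℝ`. -/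
def stdGaussian (ι : Type*) [Fintype ι] : Measure (ι → ℝ) :=
  Measure.pi fun _ => gaussianReal 0 1

/-- Standard Gaussian measure on `n × n` matrices (as `Fin n → Fin n → ℝ`). -/
def stdGaussianMat (n : ℕ) : Measure (Fin n → Fin n → ℝ) :=
  Measure.pi fun _ => stdGaussian (Fin n)

/-- Query maps of a deterministic `t`-round adaptive algorithm making `k` linear
measurements per round on inputs in `ℝ^N`. -/
def QueryMaps (N k t : ℕ) : Type :=
  (j : Fin t) → (Fin (j : ℕ) → (Fin k → ℝ)) → Matrix (Fin k) (Fin N) ℝ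

namespace QueryMaps

variable {N k t : ℕ}

/-- Restriction of a round-`j` history to the first `i` rounds. -/
def prefixHist {j : Fin t} (h : Fin (j : ℕ) → Fin k → ℝ) {i : Fin t}
    (hij : (i : ℕ) < (j : ℕ)) : Fin (i : ℕ) → Fin k → ℝ :=
  fun l => h ⟨l.1, l.isLt.trans hij⟩

/-- Validity of query maps: measurability, orthonormal rows within each round, and
orthogonality across rounds along consistent histories. -/
def Valid (Q : QueryMaps N k t) : Prop :=
  (∀ (j : Fin t) (i : Fin k) (l : Fin N), Measurable fun h => Q j h i l) ∧
  (∀ (j : Fin t) (h : Fin (j : ℕ) → Fin k → ℝ), Q j h * (Q j h)ᵀ = 1) ∧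
  (∀ (j i : Fin t) (hij : (i : ℕ) < (j : ℕ)) (h : Fin (j : ℕ) → Fin k → ℝ),
      Q j h * (Q i (prefixHist h hij))ᵀ = 0)

/-- Responses of the algorithm under exact linear measurements of `a`. -/
def resp (Q : QueryMaps N k t) (a : Fin N → ℝ) (j : Fin t) : Fin k → ℝ :=
  (Q j fun i => resp Q a ⟨i.1, i.isLt.trans j.isLt⟩).mulVec a
termination_by (j : ℕ)
decreasing_by exact i.isLt

/-- Responses of the algorithm under noisy linear measurements of `a`, with fresh
per-round noise `g`. -/
def nresp (Q : QueryMaps N k t) (a : Fin N → ℝ) (g : Fin t → Fin k → ℝ) (j : Fin t) :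
    Fin k → ℝ :=
  ((Q j fun i => nresp Q a g ⟨i.1, i.isLt.trans j.isLt⟩).mulVec a) + g j
termination_by (j : ℕ)
decreasing_by exact i.isLt

/-- The `tk × N` matrix stacking all the query matrices realized along the run of the
algorithm on input `a` (exact measurements). -/
def runMat (Q : QueryMaps N k t) (a : Fin N → ℝ) : Matrix (Fin t × Fin k) (Fin N) ℝ :=
  Matrix.of fun p l =>
    Q p.1 (fun i => resp Q a ⟨i.1, i.isLt.trans p.1.isLt⟩) p.2 l

end QueryMaps

/-- Kullback–Leibler divergence, valued in `[0, ∞]`, defined with the natural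
logarithm. -/
def klDiv {Ω : Type*} [MeasurableSpace Ω] (P Q : Measure Ω) : ℝ≥0∞ :=
  if P ≪ Q ∧ Integrable (fun x => Real.log ((P.rnDeriv Q x).toReal)) P then
    ENNReal.ofReal (∫ x, Real.log ((P.rnDeriv Q x).toReal) ∂P)
  else ⊤


/-- The rank-`r` plant `Σ_{i=1}^r uᵢ vᵢᵀ` built from the rows of `U` and `V`. -/
def plant {n r : ℕ} (U V : Fin r → Fin n → ℝ) : Matrix (Fin n) (Fin n) ℝ :=
  Matrix.of fun i j => ∑ l, U l i * V l j

/-- Schatten-`p` norm (real `p`), via the singular values. -/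
def schattenNorm {n : ℕ} (p : ℝ) (A : Matrix (Fin n) (Fin n) ℝ) : ℝ :=
  (∑ i ∈ Finset.range n, singVal A (i + 1) ^ p) ^ (1 / p)

/-- Ky-Fan `p` norm: sum of the `p` largest singular values. -/
def kyFanNorm {n : ℕ} (p : ℕ) (A : Matrix (Fin n) (Fin n) ℝ) : ℝ :=
  ∑ i ∈ Finset.range p, singVal A (i + 1)

section Matrices

variable {ι m n : Type*} [Fintype ι] [Fintype n]

lemma sqNorm_nonneg (x : ι → ℝ) : 0 ≤ sqNorm x :=
  Finset.sum_nonneg fun _ _ => sq_nonneg _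

lemma sqNorm_eq_dotProduct (x : ι → ℝ) : sqNorm x = x ⬝ᵥ x := by
  simp [sqNorm, dotProduct, sq]

lemma sqNorm_smul (c : ℝ) (x : ι → ℝ) : sqNorm (c • x) = c ^ 2 * sqNorm x := by
  simp [sqNorm, mul_pow, Finset.mul_sum]

lemma sqNorm_single_one [DecidableEq ι] (i : ι) : sqNorm (Pi.single i (1 : ℝ)) = 1 := by
  simp [sqNorm, Pi.single_apply]

@[fun_prop]
lemma measurable_sqNorm : Measurable (sqNorm : (ι → ℝ) → ℝ) := by
  unfold sqNorm
  fun_prop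

@[fun_prop]
lemma measurable_mulVec_of_measurable_entries {Ω : Type*} [MeasurableSpace Ω]
    {A : Ω → Matrix m n ℝ} {x : Ω → n → ℝ} (hA : ∀ i j, Measurable fun ω => A ω i j)
    (hx : Measurable x) : Measurable fun ω => A ω *ᵥ x ω := by
  refine measurable_pi_lambda _ fun i => ?_
  simp only [mulVec, dotProduct]
  fun_prop

variable [Fintype m]

lemma sqNorm_mulVec_eq_dotProduct (A : Matrix m n ℝ) (x : n → ℝ) :
    sqNorm (A *ᵥ x) = x ⬝ᵥ (Aᵀ * A) *ᵥ x := by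
  rw [sqNorm_eq_dotProduct, ← mulVec_mulVec, dotProduct_mulVec x, vecMul_transpose]

lemma sqNorm_transpose_mulVec [DecidableEq m] {A : Matrix m n ℝ} (hA : A * Aᵀ = 1) (x : m → ℝ) :
    sqNorm (Aᵀ *ᵥ x) = sqNorm x := by
  rw [sqNorm_mulVec_eq_dotProduct, transpose_transpose, hA, one_mulVec, sqNorm_eq_dotProduct]

lemma sqNorm_mulVec_le [DecidableEq m] {A : Matrix m n ℝ} (hA : A * Aᵀ = 1) (x : n → ℝ) :
    sqNorm (A *ᵥ x) ≤ sqNorm x := by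
  have pythagoras : sqNorm (x - Aᵀ *ᵥ A *ᵥ x) = sqNorm x - sqNorm (A *ᵥ x) := by
    rw [sqNorm_eq_dotProduct, sub_dotProduct, dotProduct_sub, dotProduct_sub,
      ← sqNorm_eq_dotProduct (Aᵀ *ᵥ A *ᵥ x), sqNorm_transpose_mulVec hA,
      dotProduct_comm (Aᵀ *ᵥ A *ᵥ x) x, mulVec_mulVec, ← sqNorm_mulVec_eq_dotProduct,
      ← sqNorm_eq_dotProduct]
    ring
  linarith [sqNorm_nonneg (x - Aᵀ *ᵥ A *ᵥ x)]

lemma frobSq_eq_trace_transpose_mul (A : Matrix m n ℝ) : frobSq A = trace (Aᵀ * A) := by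
  simp only [frobSq, trace, diag_apply, mul_apply, transpose_apply, ← sq]
  exact Finset.sum_comm

lemma frobSq_eq_sum_sqNorm_mulVec_single [DecidableEq n] (A : Matrix m n ℝ) :
    frobSq A = ∑ j, sqNorm (A *ᵥ Pi.single j 1) := by
  simp only [frobSq, sqNorm, mulVec_single_one, col_apply]
  exact Finset.sum_comm

lemma frobSq_eq_card_of_mul_transpose_eq_one [DecidableEq m] {A : Matrix m n ℝ}
    (hA : A * Aᵀ = 1) : frobSq A = Fintype.card m := by
  rw [frobSq_eq_trace_transpose_mul, trace_mul_comm, hA, trace_one]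

lemma exists_orthogonal_sqNorm_mulVec_eq_sum [DecidableEq n] (A : Matrix m n ℝ) :
    ∃ (U : Matrix n n ℝ) (d : n → ℝ), U * Uᵀ = 1 ∧ ∑ i, d i = frobSq A ∧
      ∀ x, sqNorm (A *ᵥ U *ᵥ x) = ∑ i, d i * x i ^ 2 := by
  have herm : (Aᵀ * A).IsHermitian := by
    simpa only [conjTranspose_eq_transpose_of_trivial] using isHermitian_conjTranspose_mul_self A
  set U : Matrix n n ℝ := herm.eigenvectorUnitary.1
  have transpose_mul_self : Uᵀ * U = 1 := Unitary.coe_star_mul_self herm.eigenvectorUnitary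
  have diagonalized : Uᵀ * (Aᵀ * A) * U = diagonal herm.eigenvalues := by
    have := herm.conjStarAlgAut_star_eigenvectorUnitary
    rwa [Unitary.conjStarAlgAut_star_apply] at this
  refine ⟨U, herm.eigenvalues, mul_eq_one_comm.1 transpose_mul_self, ?_, fun x => ?_⟩
  · rw [frobSq_eq_trace_transpose_mul]
    exact herm.trace_eq_sum_eigenvalues.symm
  · rw [mulVec_mulVec, sqNorm_mulVec_eq_dotProduct, transpose_mul, ← Matrix.mul_assoc,
      Matrix.mul_assoc Uᵀ, diagonalized]
    simp only [dotProduct, mulVec_diagonal]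
    exact Finset.sum_congr rfl fun i _ => by ring

end Matrices

section StandardGaussian

lemma lintegral_prod_pi {ι : Type*} [Fintype ι] {X : ι → Type*} [∀ i, MeasurableSpace (X i)]
    (μ : ∀ i, Measure (X i)) [∀ i, IsProbabilityMeasure (μ i)] {f : ∀ i, X i → ℝ≥0∞}
    (hf : ∀ i, Measurable (f i)) :
    ∫⁻ x, ∏ i, f i (x i) ∂(Measure.pi μ) = ∏ i, ∫⁻ y, f i y ∂(μ i) := by
  rw [lintegral_prod_eq_prod_lintegral_of_indepFun Finset.univ (fun i (x : ∀ i, X i) => f i (x i))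
    (iIndepFun_pi fun i => (hf i).aemeasurable) (fun i => (hf i).comp (measurable_pi_apply i))]
  exact Finset.prod_congr rfl fun i _ => (measurePreserving_eval μ i).lintegral_comp (hf i)

lemma pi_withDensity {ι : Type*} [Fintype ι] {X : ι → Type*} [∀ i, MeasurableSpace (X i)]
    (μ : ∀ i, Measure (X i)) [∀ i, IsProbabilityMeasure (μ i)] {f : ∀ i, X i → ℝ≥0∞}
    (hf : ∀ i, Measurable (f i)) [∀ i, SigmaFinite ((μ i).withDensity (f i))] :
    Measure.pi (fun i => (μ i).withDensity (f i)) =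
      (Measure.pi μ).withDensity fun x => ∏ i, f i (x i) := by
  refine Measure.pi_eq fun s hs => ?_
  have indicator_prod : (Set.univ.pi s).indicator (fun x => ∏ i, f i (x i)) =
      fun x => ∏ i, (s i).indicator (f i) (x i) := by
    ext x
    by_cases hx : x ∈ Set.univ.pi s
    · rw [Set.indicator_of_mem hx]
      exact Finset.prod_congr rfl fun i _ => (Set.indicator_of_mem (hx i (Set.mem_univ i)) _).symm
    · obtain ⟨i, hi⟩ : ∃ i, x i ∉ s i := by simpa [Set.mem_pi] using hx
      rw [Set.indicator_of_notMem hx]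
      exact (Finset.prod_eq_zero (Finset.mem_univ i) (Set.indicator_of_notMem hi _)).symm
  rw [withDensity_apply _ (.univ_pi hs), ← lintegral_indicator (.univ_pi hs), indicator_prod,
    lintegral_prod_pi μ fun i => (hf i).indicator (hs i)]
  exact Finset.prod_congr rfl fun i _ => by
    rw [lintegral_indicator (hs i), withDensity_apply _ (hs i)]

lemma gaussianReal_eq_withDensity (y : ℝ) :
    gaussianReal y 1 = (gaussianReal 0 1).withDensity
      fun x => ENNReal.ofReal (Real.exp (y * x - y ^ 2 / 2)) := by
  rw [gaussianReal_of_var_ne_zero _ one_ne_zero, gaussianReal_of_var_ne_zero _ one_ne_zero,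
    ← withDensity_mul _ (by fun_prop) (by fun_prop)]
  congr 1
  ext x
  simp only [Pi.mul_apply, gaussianPDF, gaussianPDFReal]
  rw [← ENNReal.ofReal_mul (by positivity), mul_assoc _ (Real.exp _) (Real.exp _), ← Real.exp_add]
  congr 3
  simp only [NNReal.coe_one]
  ring

lemma lintegral_exp_mul_sq_gaussianReal_le {y : ℝ} (h0 : 0 ≤ y) (hy : y ≤ 1 / 4) :
    ∫⁻ x, ENNReal.ofReal (Real.exp (y * x ^ 2)) ∂(gaussianReal 0 1) ≤
      ENNReal.ofReal (Real.exp (2 * y)) := by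
  have gaussian_integrand (x : ℝ) :
      (gaussianPDF 0 1 * fun x => ENNReal.ofReal (Real.exp (y * x ^ 2))) x =
        ENNReal.ofReal ((√(2 * Real.pi))⁻¹ * Real.exp (-(1 / 2 - y) * x ^ 2)) := by
    simp only [Pi.mul_apply, gaussianPDF, gaussianPDFReal]
    rw [← ENNReal.ofReal_mul (by positivity), mul_assoc _ (Real.exp _) (Real.exp _), ← Real.exp_add]
    simp only [NNReal.coe_one, mul_one]
    congr 3
    ring
  have normalization : (2 * Real.pi)⁻¹ * (Real.pi / (1 / 2 - y)) = (1 - 2 * y)⁻¹ := by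
    have : 1 - 2 * y ≠ 0 := by linarith
    have := Real.pi_pos.ne'
    field_simp
  rw [gaussianReal_of_var_ne_zero _ one_ne_zero,
    lintegral_withDensity_eq_lintegral_mul _ (by fun_prop) (by fun_prop)]
  simp_rw [gaussian_integrand]
  rw [← ofReal_integral_eq_lintegral_ofReal
      ((integrable_exp_neg_mul_sq (by linarith : 0 < 1 / 2 - y)).const_mul _)
      (.of_forall fun x => by positivity),
    integral_const_mul, integral_gaussian, ← Real.sqrt_inv, ← Real.sqrt_mul (by positivity),
    normalization]
  refine ENNReal.ofReal_le_ofReal (Real.sqrt_le_iff.2 ⟨by positivity, ?_⟩)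
  rw [← Real.exp_nat_mul, inv_le_iff_one_le_mul₀ (by linarith)]
  calc (1 : ℝ) ≤ (4 * y + 1) * (1 - 2 * y) := by nlinarith
    _ ≤ Real.exp (4 * y) * (1 - 2 * y) := by
        gcongr
        · linarith
        · exact Real.add_one_le_exp _
    _ = _ := by push_cast; ring_nf

variable {ι p q : Type*} [Fintype ι] [Fintype p] [Fintype q]

instance : IsProbabilityMeasure (stdGaussian ι) := by
  unfold _root_.stdGaussian
  infer_instance

instance (n : ℕ) : IsProbabilityMeasure (stdGaussianMat n) := by
  unfold stdGaussianMat
  infer_instance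

lemma charFun_map_toLp_stdGaussian (t : EuclideanSpace ℝ ι) :
    charFun ((stdGaussian ι).map (WithLp.toLp 2)) t = Complex.exp (-‖t‖ ^ 2 / 2) := by
  rw [_root_.stdGaussian, map_pi_eq_stdGaussian, charFun_stdGaussian]

lemma map_mulVec_stdGaussian [DecidableEq p] {L : Matrix p q ℝ} (hL : L * Lᵀ = 1) :
    (stdGaussian q).map (fun x => L *ᵥ x) = stdGaussian p := by
  have meas : Measurable fun x : q → ℝ => L *ᵥ x := by fun_prop
  have norm_adjoint (t : EuclideanSpace ℝ p) : ‖WithLp.toLp 2 (Lᵀ *ᵥ t.ofLp)‖ = ‖t‖ := by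
    rw [← sq_eq_sq₀ (norm_nonneg _) (norm_nonneg _), EuclideanSpace.real_norm_sq_eq,
      EuclideanSpace.real_norm_sq_eq]
    exact sqNorm_transpose_mulVec hL _
  have inner_adjoint (t : EuclideanSpace ℝ p) (x : q → ℝ) :
      inner ℝ (WithLp.toLp 2 (L *ᵥ x)) t =
        inner ℝ (WithLp.toLp 2 x) (WithLp.toLp 2 (Lᵀ *ᵥ t.ofLp)) := by
    simp only [EuclideanSpace.inner_eq_star_dotProduct, star_trivial]
    rw [mulVec_transpose, dotProduct_mulVec]
  apply (MeasurableEquiv.toLp 2 (p → ℝ)).map_measurableEquiv_injective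
  have := Measure.isProbabilityMeasure_map (μ := stdGaussian q) meas.aemeasurable
  apply Measure.ext_of_charFun (E := EuclideanSpace ℝ p)
  ext t
  have adjoint := charFun_map_toLp_stdGaussian (WithLp.toLp 2 (Lᵀ *ᵥ t.ofLp))
  rw [charFun_apply, integral_map (by fun_prop) (by fun_prop), norm_adjoint] at adjoint
  rw [MeasurableEquiv.coe_toLp, charFun_map_toLp_stdGaussian, Measure.map_map (by fun_prop) meas,
    charFun_apply, integral_map (by fun_prop) (by fun_prop)]
  simp only [Function.comp_apply, inner_adjoint, adjoint]

/-- The components of a standard Gaussian along and orthogonal to the row space of `A` are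
independent. -/
lemma lintegral_stdGaussian_eq_lintegral_lintegral_rowSpace [DecidableEq p]
    {A : Matrix p q ℝ} (hA : A * Aᵀ = 1) {f : (q → ℝ) → ℝ≥0∞} (hf : Measurable f) :
    ∫⁻ a, f a ∂(stdGaussian q) =
      ∫⁻ g, ∫⁻ a, f (Aᵀ *ᵥ g + (a - Aᵀ *ᵥ A *ᵥ a)) ∂(stdGaussian q) ∂(stdGaussian p) := by
  set L : Matrix q (p ⊕ q) ℝ := fromCols Aᵀ (1 - Aᵀ * A) with L_def
  have orthonormal : L * Lᵀ = 1 := by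
    have idempotent : Aᵀ * A * (Aᵀ * A) = Aᵀ * A := by
      rw [Matrix.mul_assoc, ← Matrix.mul_assoc A, hA, Matrix.one_mul]
    rw [L_def, transpose_fromCols, fromCols_mul_fromRows]
    simp only [transpose_transpose, transpose_sub, transpose_one, transpose_mul]
    rw [Matrix.mul_sub, Matrix.sub_mul, Matrix.sub_mul, idempotent]
    simp
  let e := (MeasurableEquiv.sumPiEquivProdPi fun _ : p ⊕ q => ℝ).symm
  have L_apply (g : p → ℝ) (a : q → ℝ) : L *ᵥ e (g, a) = Aᵀ *ᵥ g + (a - Aᵀ *ᵥ A *ᵥ a) := by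
    have : e (g, a) = Sum.elim g a := by
      ext (i | i) <;> rfl
    rw [this, L_def, fromCols_mulVec_sumElim, sub_mulVec, one_mulVec, mulVec_mulVec]
  have e_preserving :
      MeasurePreserving e ((stdGaussian p).prod (stdGaussian q)) (stdGaussian (p ⊕ q)) :=
    measurePreserving_sumPiEquivProdPi_symm fun _ => gaussianReal 0 1
  have meas : Measurable fun x : p ⊕ q → ℝ => f (L *ᵥ x) := by fun_prop
  calc ∫⁻ a, f a ∂(stdGaussian q)
      = ∫⁻ x, f (L *ᵥ x) ∂(stdGaussian (p ⊕ q)) := by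
        rw [← map_mulVec_stdGaussian orthonormal, lintegral_map hf (by fun_prop)]
    _ = ∫⁻ z, f (L *ᵥ e z) ∂((stdGaussian p).prod (stdGaussian q)) :=
        (e_preserving.lintegral_comp meas).symm
    _ = ∫⁻ g, ∫⁻ a, f (L *ᵥ e (g, a)) ∂(stdGaussian q) ∂(stdGaussian p) :=
        lintegral_prod _ (meas.comp e_preserving.measurable).aemeasurable
    _ = _ := by simp only [L_apply]

lemma map_add_const_stdGaussian (y : ι → ℝ) :
    (stdGaussian ι).map (fun x => x + y) = (stdGaussian ι).withDensity
      fun x => ENNReal.ofReal (Real.exp (y ⬝ᵥ x - sqNorm y / 2)) := by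
  have density_prod (x : ι → ℝ) : ENNReal.ofReal (Real.exp (y ⬝ᵥ x - sqNorm y / 2)) =
      ∏ i, ENNReal.ofReal (Real.exp (y i * x i - y i ^ 2 / 2)) := by
    rw [← ENNReal.ofReal_prod_of_nonneg fun _ _ => (Real.exp_pos _).le, ← Real.exp_sum]
    simp only [dotProduct, sqNorm, Finset.sum_sub_distrib, Finset.sum_div]
  have (i : ι) : SigmaFinite ((gaussianReal 0 1).withDensity
      fun x => ENNReal.ofReal (Real.exp (y i * x - y i ^ 2 / 2))) := by
    rw [← gaussianReal_eq_withDensity]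
    infer_instance
  calc (stdGaussian ι).map (fun x => x + y)
      = Measure.pi fun i => (gaussianReal 0 1).map (· + y i) :=
        Measure.pi_map_pi (μ := fun _ => gaussianReal 0 1) (f := fun i x => x + y i)
          fun i => by fun_prop
    _ = Measure.pi fun i => (gaussianReal 0 1).withDensity
          fun x => ENNReal.ofReal (Real.exp (y i * x - y i ^ 2 / 2)) := by
        simp only [gaussianReal_map_add_const, zero_add, ← gaussianReal_eq_withDensity]
    _ = _ := by
        rw [pi_withDensity _ fun i => by fun_prop]
        simp only [density_prod, _root_.stdGaussian]

/-- The Cameron–Martin formula. -/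
lemma lintegral_stdGaussian_add (y : ι → ℝ) {f : (ι → ℝ) → ℝ≥0∞} (hf : Measurable f) :
    ∫⁻ x, f (x + y) ∂(stdGaussian ι) =
      ∫⁻ x, ENNReal.ofReal (Real.exp (y ⬝ᵥ x - sqNorm y / 2)) * f x ∂(stdGaussian ι) := by
  have meas : Measurable fun x : ι → ℝ => ENNReal.ofReal (Real.exp (y ⬝ᵥ x - sqNorm y / 2)) := by
    unfold dotProduct
    fun_prop
  rw [← lintegral_map hf (measurable_add_const y), map_add_const_stdGaussian,
    lintegral_withDensity_eq_lintegral_mul _ meas hf]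
  rfl

end StandardGaussian

section QuadraticForms

variable {m n : Type*} [Fintype m] [Fintype n]

lemma measure_gt_le_exp_mul_lintegral_exp {Ω : Type*} [MeasurableSpace Ω] (μ : Measure Ω)
    {X : Ω → ℝ} (hX : Measurable X) {l : ℝ} (hl : 0 ≤ l) (b : ℝ) :
    μ {ω | b < X ω} ≤
      ENNReal.ofReal (Real.exp (-(l * b))) * ∫⁻ ω, ENNReal.ofReal (Real.exp (l * X ω)) ∂μ := by
  rw [← lintegral_const_mul _ (by fun_prop)]
  refine (measure_mono fun ω (hω : b < X ω) => ?_).trans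
    (meas_ge_le_lintegral_div (ε := 1) (by fun_prop) one_ne_zero ENNReal.one_ne_top |>.trans_eq
      (div_one _))
  rw [Set.mem_ofPred_eq, ← ENNReal.ofReal_mul (Real.exp_pos _).le, ← Real.exp_add,
    ENNReal.one_le_ofReal, Real.one_le_exp_iff]
  nlinarith

lemma lintegral_exp_sum_mul_sq_stdGaussian_le {d : n → ℝ} (h0 : ∀ i, 0 ≤ d i)
    (h1 : ∀ i, d i ≤ 1 / 4) :
    ∫⁻ x, ENNReal.ofReal (Real.exp (∑ i, d i * x i ^ 2)) ∂(stdGaussian n) ≤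
      ENNReal.ofReal (Real.exp (2 * ∑ i, d i)) := by
  simp only [Real.exp_sum, ENNReal.ofReal_prod_of_nonneg fun _ _ => (Real.exp_pos _).le,
    Finset.mul_sum]
  rw [_root_.stdGaussian, lintegral_prod_pi _
    (f := fun i x => ENNReal.ofReal (Real.exp (d i * x ^ 2))) fun i => by fun_prop]
  exact Finset.prod_le_prod' fun i _ => lintegral_exp_mul_sq_gaussianReal_le (h0 i) (h1 i)

lemma lintegral_exp_mul_sqNorm_mulVec_stdGaussian_le (A : Matrix m n ℝ) {l κ : ℝ} (hl : 0 ≤ l)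
    (hA : ∀ u, sqNorm (A *ᵥ u) ≤ κ * sqNorm u) (hκ : l * κ ≤ 1 / 4) :
    ∫⁻ u, ENNReal.ofReal (Real.exp (l * sqNorm (A *ᵥ u))) ∂(stdGaussian n) ≤
      ENNReal.ofReal (Real.exp (2 * (l * frobSq A))) := by
  obtain ⟨U, d, orthogonal, sum_d, diagonalized⟩ := exists_orthogonal_sqNorm_mulVec_eq_sum A
  have transpose_mul_self : Uᵀ * Uᵀᵀ = 1 := by
    rw [transpose_transpose, mul_eq_one_comm, orthogonal]
  have d_eq (i : n) : d i = sqNorm (A *ᵥ U *ᵥ Pi.single i 1) := by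
    rw [diagonalized]
    simp [Pi.single_apply]
  have d_nonneg (i : n) : 0 ≤ d i := d_eq i ▸ sqNorm_nonneg _
  have d_le (i : n) : d i ≤ κ := by
    have := hA (U *ᵥ Pi.single i 1)
    rwa [← d_eq, ← transpose_transpose U, sqNorm_transpose_mulVec transpose_mul_self,
      sqNorm_single_one, mul_one] at this
  rw [← map_mulVec_stdGaussian orthogonal, lintegral_map (by fun_prop) (by fun_prop), ← sum_d]
  simp only [diagonalized, Finset.mul_sum Finset.univ _ l, ← mul_assoc l]
  exact lintegral_exp_sum_mul_sq_stdGaussian_le (fun i => mul_nonneg hl (d_nonneg i))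
    fun i => (mul_le_mul_of_nonneg_left (d_le i) hl).trans hκ

lemma stdGaussian_sqNorm_mulVec_gt_le (A : Matrix m n ℝ) {l κ : ℝ} (hl : 0 ≤ l)
    (hA : ∀ u, sqNorm (A *ᵥ u) ≤ κ * sqNorm u) (hκ : l * κ ≤ 1 / 4) (b : ℝ) :
    stdGaussian n {u | b < sqNorm (A *ᵥ u)} ≤
      ENNReal.ofReal (Real.exp (-(l * b) + 2 * (l * frobSq A))) := by
  rw [Real.exp_add, ENNReal.ofReal_mul (Real.exp_pos _).le]
  refine (measure_gt_le_exp_mul_lintegral_exp _ (by fun_prop) hl b).trans ?_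
  gcongr
  exact lintegral_exp_mul_sqNorm_mulVec_stdGaussian_le A hl hA hκ

lemma stdGaussian_sqNorm_gt_le (b : ℝ) :
    stdGaussian n {u | b < sqNorm u} ≤
      ENNReal.ofReal (Real.exp (-(b - 2 * Fintype.card n) / 4)) := by
  have tail := stdGaussian_sqNorm_mulVec_gt_le (1 : Matrix n n ℝ) (l := 1 / 4) (κ := 1)
    (by norm_num) (fun u => by rw [one_mulVec, one_mul]) (by norm_num) b
  rw [frobSq_eq_card_of_mul_transpose_eq_one (by simp)] at tail
  simp only [one_mulVec] at tail
  convert tail using 3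
  ring

end QuadraticForms

section TensorTail

variable {n : ℕ} {m : Type*}

lemma sqNorm_tensor (u v : Fin n → ℝ) : sqNorm (tensor u v) = sqNorm u * sqNorm v := by
  unfold sqNorm tensor _root_.vec
  rw [← finProdFinEquiv.sum_comp]
  simp [Fintype.sum_prod_type, Finset.sum_mul_sum, mul_pow]

@[fun_prop]
lemma measurable_tensor {Ω : Type*} [MeasurableSpace Ω] {u v : Ω → Fin n → ℝ}
    (hu : Measurable u) (hv : Measurable v) : Measurable fun ω => tensor (u ω) (v ω) := by
  unfold tensor _root_.vec
  simp only [of_apply]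
  fun_prop

/-- The matrix of the linear map `u ↦ A (u ⊗ v)`. -/
def tensorContraction (A : Matrix m (Fin (n * n)) ℝ) (v : Fin n → ℝ) : Matrix m (Fin n) ℝ :=
  Matrix.of fun i a => ∑ b, A i (finProdFinEquiv (a, b)) * v b

/-- The matrix of the linear map `v ↦ tensorContraction A v`, the entries of a contraction being
indexed by the pairs in `m × Fin n`. -/
def tensorReshape (A : Matrix m (Fin (n * n)) ℝ) : Matrix (m × Fin n) (Fin n) ℝ :=
  Matrix.of fun p b => A p.1 (finProdFinEquiv (p.2, b))

lemma mulVec_tensor (A : Matrix m (Fin (n * n)) ℝ) (u v : Fin n → ℝ) :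
    A *ᵥ tensor u v = tensorContraction A v *ᵥ u := by
  ext i
  simp only [mulVec, dotProduct, tensorContraction, tensor, _root_.vec, of_apply, Finset.sum_mul]
  rw [← finProdFinEquiv.sum_comp, Fintype.sum_prod_type]
  simp only [Equiv.symm_apply_apply]
  exact Finset.sum_congr rfl fun a _ => Finset.sum_congr rfl fun b _ => by ring

variable [Fintype m]

lemma frobSq_tensorContraction (A : Matrix m (Fin (n * n)) ℝ) (v : Fin n → ℝ) :
    frobSq (tensorContraction A v) = sqNorm (tensorReshape A *ᵥ v) := by
  simp [frobSq, sqNorm, Fintype.sum_prod_type, tensorContraction, tensorReshape, mulVec, dotProduct]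

lemma frobSq_tensorReshape (A : Matrix m (Fin (n * n)) ℝ) :
    frobSq (tensorReshape A) = frobSq A := by
  simp only [frobSq, tensorReshape, of_apply, Fintype.sum_prod_type]
  refine Finset.sum_congr rfl fun i _ => ?_
  rw [← finProdFinEquiv.sum_comp, Fintype.sum_prod_type]

variable [DecidableEq m] {A : Matrix m (Fin (n * n)) ℝ}

lemma sqNorm_tensorContraction_mulVec_le (hA : A * Aᵀ = 1) (u v : Fin n → ℝ) :
    sqNorm (tensorContraction A v *ᵥ u) ≤ sqNorm v * sqNorm u := by
  rw [← mulVec_tensor, mul_comm (sqNorm v), ← sqNorm_tensor]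
  exact sqNorm_mulVec_le hA _

lemma sqNorm_tensorReshape_mulVec_le (hA : A * Aᵀ = 1) (v : Fin n → ℝ) :
    sqNorm (tensorReshape A *ᵥ v) ≤ n * sqNorm v := by
  rw [← frobSq_tensorContraction, frobSq_eq_sum_sqNorm_mulVec_single]
  calc ∑ a, sqNorm (tensorContraction A v *ᵥ Pi.single a 1)
      ≤ ∑ _a : Fin n, sqNorm v := Finset.sum_le_sum fun a _ => by
        simpa only [sqNorm_single_one, mul_one] using
          sqNorm_tensorContraction_mulVec_le hA (Pi.single a 1) v
    _ = n * sqNorm v := by simp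

/-- Given `v`, the projection of `u ⊗ v` is a quadratic form in `u` of operator norm at most
`‖v‖²`; its trace is in turn a quadratic form in `v`, of operator norm at most `n`. -/
lemma stdGaussian_prod_sqNorm_mulVec_tensor_gt_le (hA : A * Aᵀ = 1) {R : ℝ} (hR : 0 < R)
    (hnR : 2 * n ≤ R) (b : ℝ) :
    ((stdGaussian (Fin n)).prod (stdGaussian (Fin n)))
        ({w | sqNorm w.2 ≤ R} ∩ {w | b < sqNorm (A *ᵥ tensor w.1 w.2)}) ≤
      ENNReal.ofReal (Real.exp (-(b - 4 * Fintype.card m) / (4 * R))) := by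
  have meas : MeasurableSet ({w : (Fin n → ℝ) × (Fin n → ℝ) | sqNorm w.2 ≤ R} ∩
      {w | b < sqNorm (A *ᵥ tensor w.1 w.2)}) :=
    (measurableSet_le (by fun_prop) (by fun_prop)).inter
      (measurableSet_lt (by fun_prop) (by fun_prop))
  have hl : 0 ≤ 1 / (4 * R) := by positivity
  have slice_le (v : Fin n → ℝ) :
      stdGaussian (Fin n) ((fun u => (u, v)) ⁻¹'
          ({w | sqNorm w.2 ≤ R} ∩ {w | b < sqNorm (A *ᵥ tensor w.1 w.2)})) ≤
        ENNReal.ofReal (Real.exp (-(1 / (4 * R) * b))) *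
          ENNReal.ofReal (Real.exp (2 * (1 / (4 * R)) * sqNorm (tensorReshape A *ᵥ v))) := by
    by_cases hv : sqNorm v ≤ R
    · have tail := stdGaussian_sqNorm_mulVec_gt_le (tensorContraction A v) hl
        (fun u => sqNorm_tensorContraction_mulVec_le hA u v)
        (by rw [one_div_mul_eq_div, div_le_iff₀ (by positivity)]; linarith) b
      rw [frobSq_tensorContraction, ← mul_assoc, Real.exp_add,
        ENNReal.ofReal_mul (Real.exp_pos _).le] at tail
      simpa [hv, mulVec_tensor] using tail
    · simp [hv]
  rw [Measure.prod_apply_symm meas]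
  refine (lintegral_mono slice_le).trans ?_
  rw [lintegral_const_mul _ (by fun_prop)]
  have mgf := lintegral_exp_mul_sqNorm_mulVec_stdGaussian_le (tensorReshape A)
    (l := 2 * (1 / (4 * R))) (by positivity) (sqNorm_tensorReshape_mulVec_le hA)
    (by rw [mul_one_div, div_mul_eq_mul_div, div_le_iff₀ (by positivity)]; linarith)
  rw [frobSq_tensorReshape, frobSq_eq_card_of_mul_transpose_eq_one hA] at mgf
  refine (mul_le_mul_right mgf _).trans_eq ?_
  rw [← ENNReal.ofReal_mul (Real.exp_pos _).le, ← Real.exp_add]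
  congr 2
  field_simp
  ring

end TensorTail

section FiniteSequences

variable {X : Type*} [MeasurableSpace X] {t : ℕ}

@[fun_prop]
lemma measurable_vecCons {Ω : Type*} [MeasurableSpace Ω] {z : Ω → X} {r : Ω → Fin t → X}
    (hz : Measurable z) (hr : Measurable r) : Measurable fun ω => vecCons (z ω) (r ω) :=
  measurable_pi_lambda _ (Fin.cases hz fun j => (measurable_pi_apply j).comp hr)

lemma lintegral_pi_fin_succ (μ : Measure X) [SigmaFinite μ] {F : (Fin (t + 1) → X) → ℝ≥0∞}
    (hF : Measurable F) :
    ∫⁻ r, F r ∂(Measure.pi fun _ => μ) =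
      ∫⁻ z, ∫⁻ r, F (vecCons z r) ∂(Measure.pi fun _ => μ) ∂μ := by
  have split := (measurePreserving_piFinSuccAbove (fun _ : Fin (t + 1) => μ) 0).symm
  have split_apply (z : X) (r : Fin t → X) :
      (MeasurableEquiv.piFinSuccAbove (fun _ => X) 0).symm (z, r) = vecCons z r := by
    ext j
    refine Fin.cases ?_ (fun j => ?_) j <;> rfl
  rw [← split.lintegral_comp hF]
  simp only [← split_apply]
  exact lintegral_prod _ (hF.comp split.measurable).aemeasurable

end FiniteSequences

namespace QueryMaps

variable {N k t : ℕ}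

/-- The part of a transcript that is available before round `j`. -/
def history (r : Fin t → Fin k → ℝ) (j : Fin t) : Fin (j : ℕ) → Fin k → ℝ :=
  fun i => r ⟨i, i.isLt.trans j.isLt⟩

/-- The squared norm of the projection of `x` onto the queries issued along the transcript `r`. -/
def energy (Q : QueryMaps N k t) (r : Fin t → Fin k → ℝ) (x : Fin N → ℝ) : ℝ :=
  ∑ j, sqNorm (Q j (history r j) *ᵥ x)

/-- The density at the transcript `r` of the run on a standard Gaussian input shifted by `x`, with
respect to independent standard Gaussian responses. -/
def likelihoodRatio (Q : QueryMaps N k t) (x : Fin N → ℝ) (r : Fin t → Fin k → ℝ) : ℝ :=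
  Real.exp (∑ j, ((Q j (history r j) *ᵥ x) ⬝ᵥ r j - sqNorm (Q j (history r j) *ᵥ x) / 2))

/-- The query matrix of the first round. -/
def firstQuery (Q : QueryMaps N k (t + 1)) : Matrix (Fin k) (Fin N) ℝ :=
  Q 0 Fin.elim0

/-- The query matrix of the last round, as a function of the responses to all earlier rounds. -/
def lastQuery (Q : QueryMaps N k (t + 1)) (r : Fin t → Fin k → ℝ) : Matrix (Fin k) (Fin N) ℝ :=
  Q (Fin.last t) r

/-- The algorithm that remains once the first response is known to be `z`. -/
def afterFirst (Q : QueryMaps N k (t + 1)) (z : Fin k → ℝ) : QueryMaps N k t :=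
  fun j h => Q j.succ (vecCons z h)

/-- The algorithm stopped before its last round. -/
def dropLast (Q : QueryMaps N k (t + 1)) : QueryMaps N k t :=
  fun j h => Q j.castSucc h

lemma query_zero (Q : QueryMaps N k (t + 1)) (h : Fin ((0 : Fin (t + 1)) : ℕ) → Fin k → ℝ) :
    Q 0 h = firstQuery Q :=
  congrArg (Q 0) (funext fun i => i.elim0)

lemma query_succ_history_vecCons (Q : QueryMaps N k (t + 1)) (z : Fin k → ℝ)
    (r : Fin t → Fin k → ℝ) (j : Fin t) :
    Q j.succ (history (vecCons z r) j.succ) = afterFirst Q z j (history r j) := by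
  refine congrArg (Q j.succ) (funext fun i => ?_)
  refine Fin.cases ?_ (fun i => ?_) i <;> rfl

lemma energy_succ (Q : QueryMaps N k (t + 1)) (r : Fin (t + 1) → Fin k → ℝ) (x : Fin N → ℝ) :
    energy Q r x =
      energy (dropLast Q) (Fin.init r) x + sqNorm (lastQuery Q (Fin.init r) *ᵥ x) :=
  Fin.sum_univ_castSucc _

lemma likelihoodRatio_vecCons (Q : QueryMaps N k (t + 1)) (x : Fin N → ℝ) (z : Fin k → ℝ)
    (r : Fin t → Fin k → ℝ) :
    likelihoodRatio Q x (vecCons z r) =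
      Real.exp ((firstQuery Q *ᵥ x) ⬝ᵥ z - sqNorm (firstQuery Q *ᵥ x) / 2) *
        likelihoodRatio (afterFirst Q z) x r := by
  simp only [likelihoodRatio, ← Real.exp_add, Fin.sum_univ_succ, query_zero,
    query_succ_history_vecCons, cons_val_zero, cons_val_succ]

section Responses

lemma resp_eq (Q : QueryMaps N k t) (a : Fin N → ℝ) (j : Fin t) :
    resp Q a j = Q j (history (resp Q a) j) *ᵥ a := by
  rw [resp]
  rfl

lemma eq_resp {Q : QueryMaps N k t} {a : Fin N → ℝ} {r : Fin t → Fin k → ℝ}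
    (hr : ∀ j, r j = Q j (history r j) *ᵥ a) : r = resp Q a := by
  have agree (m : ℕ) : ∀ hm : m < t, r ⟨m, hm⟩ = resp Q a ⟨m, hm⟩ := by
    induction m using Nat.strong_induction_on with
    | _ m ih =>
      intro hm
      have same_history : history r ⟨m, hm⟩ = history (resp Q a) ⟨m, hm⟩ :=
        funext fun i => ih i i.isLt (i.isLt.trans hm)
      rw [hr, resp_eq, same_history]
  exact funext fun j => agree j j.isLt

lemma resp_eq_vecCons (Q : QueryMaps N k (t + 1)) (a : Fin N → ℝ) :
    resp Q a = vecCons (firstQuery Q *ᵥ a) (resp (afterFirst Q (firstQuery Q *ᵥ a)) a) := by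
  refine (eq_resp (Fin.cases ?_ fun j => ?_)).symm
  · rw [query_zero Q, cons_val_zero]
  · rw [query_succ_history_vecCons Q, cons_val_succ, ← resp_eq]

lemma resp_dropLast (Q : QueryMaps N k (t + 1)) (a : Fin N → ℝ) :
    resp (dropLast Q) a = Fin.init (resp Q a) :=
  (eq_resp fun j => resp_eq Q a j.castSucc).symm

lemma resp_add_of_mulVec_eq_zero {Q : QueryMaps N k t} (a : Fin N → ℝ) {b : Fin N → ℝ}
    (hb : ∀ j h, Q j h *ᵥ b = 0) : resp Q (a + b) = resp Q a :=
  (eq_resp fun j => by rw [mulVec_add, hb, add_zero, ← resp_eq]).symm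

lemma energy_resp_succ (Q : QueryMaps N k (t + 1)) (a x : Fin N → ℝ) :
    energy Q (resp Q a) x = energy (dropLast Q) (resp (dropLast Q) a) x +
      sqNorm (lastQuery Q (resp (dropLast Q) a) *ᵥ x) := by
  rw [energy_succ, resp_dropLast]

lemma sqNorm_runMat_mulVec (Q : QueryMaps N k t) (a x : Fin N → ℝ) :
    sqNorm (runMat Q a *ᵥ x) = energy Q (resp Q a) x :=
  Fintype.sum_prod_type _

end Responses

section Validity

lemma Valid.afterFirst {Q : QueryMaps N k (t + 1)} (hQ : Q.Valid) (z : Fin k → ℝ) :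
    (afterFirst Q z).Valid := by
  refine ⟨fun j i l => (hQ.1 j.succ i l).comp (by fun_prop), fun j h => hQ.2.1 _ _,
    fun j i hij h => ?_⟩
  have prefix_vecCons : prefixHist (j := j.succ) (i := i.succ) (vecCons z h)
      (Nat.succ_lt_succ hij) = vecCons z (prefixHist h hij) := by
    ext l
    refine Fin.cases ?_ (fun l => ?_) l <;> rfl
  have orthogonal := hQ.2.2 j.succ i.succ (Nat.succ_lt_succ hij) (vecCons z h)
  rwa [prefix_vecCons] at orthogonal

lemma Valid.dropLast {Q : QueryMaps N k (t + 1)} (hQ : Q.Valid) : (dropLast Q).Valid :=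
  ⟨fun j => hQ.1 j.castSucc, fun j => hQ.2.1 j.castSucc,
    fun j i hij => hQ.2.2 j.castSucc i.castSucc hij⟩

lemma Valid.firstQuery_mul_transpose {Q : QueryMaps N k (t + 1)} (hQ : Q.Valid) :
    firstQuery Q * (firstQuery Q)ᵀ = 1 :=
  hQ.2.1 0 _

lemma Valid.lastQuery_mul_transpose {Q : QueryMaps N k (t + 1)} (hQ : Q.Valid)
    (r : Fin t → Fin k → ℝ) : lastQuery Q r * (lastQuery Q r)ᵀ = 1 :=
  hQ.2.1 (Fin.last t) r

lemma Valid.afterFirst_mul_transpose_firstQuery {Q : QueryMaps N k (t + 1)} (hQ : Q.Valid)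
    (z : Fin k → ℝ) (j : Fin t) (h : Fin (j : ℕ) → Fin k → ℝ) :
    QueryMaps.afterFirst Q z j h * (firstQuery Q)ᵀ = 0 := by
  rw [← query_zero Q]
  exact hQ.2.2 j.succ 0 j.succ_pos (vecCons z h)

lemma Valid.measurable_resp {Q : QueryMaps N k t} (hQ : Q.Valid) : Measurable (resp Q) := by
  have measurable_response (m : ℕ) : ∀ hm : m < t, Measurable fun a => resp Q a ⟨m, hm⟩ := by
    induction m using Nat.strong_induction_on with
    | _ m ih =>
      intro hm
      simp_rw [resp_eq]
      refine measurable_mulVec_of_measurable_entries (fun i l => (hQ.1 ⟨m, hm⟩ i l).comp ?_)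
        measurable_id
      exact measurable_pi_lambda _ fun i => ih i i.isLt (i.isLt.trans hm)
  exact measurable_pi_lambda _ fun j => measurable_response j j.isLt

variable {Ω : Type*} [MeasurableSpace Ω] {r : Ω → Fin t → Fin k → ℝ} {x : Ω → Fin N → ℝ}

lemma Valid.measurable_query_mulVec {Q : QueryMaps N k t} (hQ : Q.Valid) (j : Fin t)
    (hr : Measurable r) (hx : Measurable x) :
    Measurable fun ω => Q j (history (r ω) j) *ᵥ x ω := by
  refine measurable_mulVec_of_measurable_entries (fun i l => (hQ.1 j i l).comp ?_) hx
  unfold history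
  fun_prop

lemma Valid.measurable_lastQuery_mulVec {Q : QueryMaps N k (t + 1)} (hQ : Q.Valid)
    (hr : Measurable r) (hx : Measurable x) : Measurable fun ω => lastQuery Q (r ω) *ᵥ x ω :=
  measurable_mulVec_of_measurable_entries (fun i l => (hQ.1 (Fin.last t) i l).comp hr) hx

lemma Valid.measurable_energy {Q : QueryMaps N k t} (hQ : Q.Valid) (hr : Measurable r)
    (hx : Measurable x) : Measurable fun ω => energy Q (r ω) (x ω) :=
  Finset.measurable_sum _ fun j _ => measurable_sqNorm.comp (hQ.measurable_query_mulVec j hr hx)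

lemma Valid.measurable_likelihoodRatio {Q : QueryMaps N k t} (hQ : Q.Valid) (x : Fin N → ℝ) :
    Measurable fun r => ENNReal.ofReal (likelihoodRatio Q x r) := by
  have (j : Fin t) : Measurable fun r => Q j (history r j) *ᵥ x :=
    hQ.measurable_query_mulVec j measurable_id measurable_const
  unfold likelihoodRatio dotProduct
  fun_prop

lemma Valid.measurable_likelihoodRatio_afterFirst {Q : QueryMaps N k (t + 1)} (hQ : Q.Valid)
    (x : Fin N → ℝ) :
    Measurable fun p : (Fin k → ℝ) × (Fin t → Fin k → ℝ) =>
      ENNReal.ofReal (likelihoodRatio (QueryMaps.afterFirst Q p.1) x p.2) := by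
  have (j : Fin t) : Measurable fun p : (Fin k → ℝ) × (Fin t → Fin k → ℝ) =>
      Q j.succ (history (vecCons p.1 p.2) j.succ) *ᵥ x :=
    hQ.measurable_query_mulVec j.succ (by fun_prop) measurable_const
  simp only [likelihoodRatio, ← query_succ_history_vecCons, dotProduct]
  fun_prop

end Validity

section TranscriptLaw

/-- The law of a transcript of independent standard Gaussian responses, the reference measure for
the laws of the transcripts of actual runs. -/
abbrev nullLaw (k t : ℕ) : Measure (Fin t → Fin k → ℝ) :=
  Measure.pi fun _ => stdGaussian (Fin k)

lemma Valid.resp_transpose_firstQuery_mulVec_add {Q : QueryMaps N k (t + 1)} (hQ : Q.Valid)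
    (g : Fin k → ℝ) (a x : Fin N → ℝ) :
    resp Q ((firstQuery Q)ᵀ *ᵥ g + (a - (firstQuery Q)ᵀ *ᵥ firstQuery Q *ᵥ a) + x) =
      vecCons (g + firstQuery Q *ᵥ x)
        (resp (QueryMaps.afterFirst Q (g + firstQuery Q *ᵥ x)) (a + x)) := by
  set A := firstQuery Q
  have first_response : A *ᵥ (Aᵀ *ᵥ g + (a - Aᵀ *ᵥ A *ᵥ a) + x) = g + A *ᵥ x := by
    rw [mulVec_add, mulVec_add, mulVec_sub, mulVec_mulVec, hQ.firstQuery_mul_transpose, one_mulVec,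
      mulVec_mulVec (A *ᵥ a), hQ.firstQuery_mul_transpose, one_mulVec, sub_self, add_zero]
  have regroup : Aᵀ *ᵥ g + (a - Aᵀ *ᵥ A *ᵥ a) + x = (a + x) + Aᵀ *ᵥ (g - A *ᵥ a) := by
    rw [mulVec_sub]
    abel
  rw [resp_eq_vecCons, first_response, regroup, resp_add_of_mulVec_eq_zero]
  intro j h
  rw [mulVec_mulVec, hQ.afterFirst_mul_transpose_firstQuery, zero_mulVec]

/-- Each round reveals a fresh Gaussian vector, translated by the image of the shift, because its
queries are orthogonal to all earlier ones. -/
theorem lintegral_resp_add (x : Fin N → ℝ) {Q : QueryMaps N k t} (hQ : Q.Valid)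
    {f : (Fin t → Fin k → ℝ) → ℝ≥0∞} (hf : Measurable f) :
    ∫⁻ a, f (resp Q (a + x)) ∂(stdGaussian (Fin N)) =
      ∫⁻ r, ENNReal.ofReal (likelihoodRatio Q x r) * f r ∂(nullLaw k t) := by
  induction t with
  | zero => simp [likelihoodRatio, Subsingleton.elim _ (Fin.elim0 : Fin 0 → Fin k → ℝ)]
  | succ t ih =>
    have meas_resp := hQ.measurable_resp
    have meas_ratio := hQ.measurable_likelihoodRatio x
    have meas_after := hQ.measurable_likelihoodRatio_afterFirst x
    set A := firstQuery Q
    calc ∫⁻ a, f (resp Q (a + x)) ∂(stdGaussian (Fin N))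
        = ∫⁻ g, ∫⁻ a, f (vecCons (g + A *ᵥ x) (resp (afterFirst Q (g + A *ᵥ x)) (a + x)))
            ∂(stdGaussian (Fin N)) ∂(stdGaussian (Fin k)) := by
          rw [lintegral_stdGaussian_eq_lintegral_lintegral_rowSpace hQ.firstQuery_mul_transpose
            (by fun_prop)]
          simp only [hQ.resp_transpose_firstQuery_mulVec_add, A]
      _ = ∫⁻ g, ∫⁻ r, ENNReal.ofReal (likelihoodRatio (afterFirst Q (g + A *ᵥ x)) x r) *
            f (vecCons (g + A *ᵥ x) r) ∂(nullLaw k t) ∂(stdGaussian (Fin k)) :=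
          lintegral_congr fun g => ih (hQ.afterFirst _)
            (hf.comp (measurable_vecCons measurable_const measurable_id))
      _ = ∫⁻ g, ENNReal.ofReal (Real.exp ((A *ᵥ x) ⬝ᵥ g - sqNorm (A *ᵥ x) / 2)) *
            ∫⁻ r, ENNReal.ofReal (likelihoodRatio (afterFirst Q g) x r) * f (vecCons g r)
              ∂(nullLaw k t) ∂(stdGaussian (Fin k)) :=
          lintegral_stdGaussian_add (A *ᵥ x)
            (Measurable.lintegral_prod_right (f := fun g r =>
              ENNReal.ofReal (likelihoodRatio (afterFirst Q g) x r) * f (vecCons g r))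
              (by fun_prop))
      _ = ∫⁻ g, ∫⁻ r, ENNReal.ofReal (likelihoodRatio Q x (vecCons g r)) * f (vecCons g r)
            ∂(nullLaw k t) ∂(stdGaussian (Fin k)) := by
          refine lintegral_congr fun g => ?_
          rw [← lintegral_const_mul' _ _ ENNReal.ofReal_ne_top]
          refine lintegral_congr fun r => ?_
          rw [likelihoodRatio_vecCons, ENNReal.ofReal_mul (Real.exp_pos _).le, mul_assoc]
      _ = _ := (lintegral_pi_fin_succ _ (meas_ratio.mul hf)).symm

end TranscriptLaw

end QueryMaps

/-- A random vector `X` with law prescribed by `W` has light-tailed projections onto `k`-dimensional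
subspaces, on the event `S`: the excess of their squared norm over `β` is exponential with scale
`τ`. Only the restriction to `S` is controlled, so that heavy tails of `X` itself can be cut off. -/
def HasProjectionTail {Ω : Type*} [MeasurableSpace Ω] {N : ℕ} (W : Measure Ω) (X : Ω → Fin N → ℝ)
    (k : ℕ) (S : Set Ω) (β τ : ℝ) : Prop :=
  ∀ A : Matrix (Fin k) (Fin N) ℝ, A * Aᵀ = 1 → ∀ b : ℝ,
    W (S ∩ {w | b < sqNorm (A *ᵥ X w)}) ≤ ENNReal.ofReal (Real.exp (-(b - β) / τ))

namespace QueryMaps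

variable {N k t : ℕ}

section SecondMoment

lemma likelihoodRatio_pos (Q : QueryMaps N k t) (x : Fin N → ℝ) (r : Fin t → Fin k → ℝ) :
    0 < likelihoodRatio Q x r :=
  Real.exp_pos _

lemma energy_smul (Q : QueryMaps N k t) (r : Fin t → Fin k → ℝ) (c : ℝ) (x : Fin N → ℝ) :
    energy Q r (c • x) = c ^ 2 * energy Q r x := by
  simp only [energy, mulVec_smul, sqNorm_smul, Finset.mul_sum]

lemma likelihoodRatio_sq (Q : QueryMaps N k t) (x : Fin N → ℝ) (r : Fin t → Fin k → ℝ) :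
    likelihoodRatio Q x r ^ 2 =
      likelihoodRatio Q ((2 : ℝ) • x) r * Real.exp (energy Q r x) := by
  rw [likelihoodRatio, likelihoodRatio, energy, ← Real.exp_nat_mul, ← Real.exp_add,
    Finset.mul_sum, ← Finset.sum_add_distrib]
  congr 1
  refine Finset.sum_congr rfl fun j _ => ?_
  rw [mulVec_smul, smul_dotProduct, sqNorm_smul, smul_eq_mul]
  push_cast
  ring

/-- On transcripts of low energy the square of the likelihood ratio is, up to a constant, another
likelihood ratio, which integrates to one. -/
lemma likelihoodRatio_le_of_energy_le {Q : QueryMaps N k t} {x : Fin N → ℝ}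
    {r : Fin t → Fin k → ℝ} {B : ℝ} (hB : energy Q r x ≤ B) (e : ℝ) :
    likelihoodRatio Q x r ≤ Real.exp (-e) / 2 * likelihoodRatio Q ((2 : ℝ) • x) r +
      Real.exp (B + e) / 2 := by
  set L := likelihoodRatio Q x r
  set L₂ := likelihoodRatio Q ((2 : ℝ) • x) r
  set c := Real.exp (B + e) with hc
  have c_pos : 0 < c := Real.exp_pos _
  have second_moment : L ^ 2 ≤ c * (Real.exp (-e) * L₂) :=
    calc L ^ 2 = L₂ * Real.exp (energy Q r x) := likelihoodRatio_sq Q x r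
      _ ≤ L₂ * Real.exp B := by
        gcongr
        exact (likelihoodRatio_pos _ _ _).le
      _ = c * (Real.exp (-e) * L₂) := by
        rw [hc, ← mul_assoc, ← Real.exp_add, add_neg_cancel_right, mul_comm]
  have am_gm : c * (2 * L) ≤ c * (Real.exp (-e) * L₂ + c) := by
    linarith [two_mul_le_add_sq L c]
  linarith [le_of_mul_le_mul_left am_gm c_pos]

lemma Valid.lintegral_likelihoodRatio {Q : QueryMaps N k t} (hQ : Q.Valid) (x : Fin N → ℝ) :
    ∫⁻ r, ENNReal.ofReal (likelihoodRatio Q x r) ∂(nullLaw k t) = 1 := by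
  simpa using (lintegral_resp_add x hQ (f := fun _ => 1) measurable_const).symm

lemma Valid.stdGaussian_resp_add_mem {Q : QueryMaps N k t} (hQ : Q.Valid) (x : Fin N → ℝ)
    {F : Set (Fin t → Fin k → ℝ)} (hF : MeasurableSet F) :
    stdGaussian (Fin N) {a | resp Q (a + x) ∈ F} =
      ∫⁻ r in F, ENNReal.ofReal (likelihoodRatio Q x r) ∂(nullLaw k t) := by
  have meas_resp : Measurable fun a => resp Q (a + x) :=
    hQ.measurable_resp.comp (measurable_id.add_const x)
  calc stdGaussian (Fin N) {a | resp Q (a + x) ∈ F}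
      = ∫⁻ a, F.indicator 1 (resp Q (a + x)) ∂(stdGaussian (Fin N)) :=
        (lintegral_indicator_one (meas_resp hF)).symm
    _ = ∫⁻ r, ENNReal.ofReal (likelihoodRatio Q x r) * F.indicator 1 r ∂(nullLaw k t) :=
        lintegral_resp_add x hQ (measurable_one.indicator hF)
    _ = ∫⁻ r in F, ENNReal.ofReal (likelihoodRatio Q x r) ∂(nullLaw k t) := by
        rw [← lintegral_indicator hF]
        simp only [Set.indicator_apply, Pi.one_apply, mul_ite, mul_one, mul_zero]

lemma Valid.stdGaussian_resp_add_smul_mem_le {Q : QueryMaps N k t} (hQ : Q.Valid)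
    (s : ℝ) (x : Fin N → ℝ) (B e : ℝ) {F : Set (Fin t → Fin k → ℝ)} (hF : MeasurableSet F) :
    stdGaussian (Fin N) {a | resp Q (a + s • x) ∈ {r | energy Q r x ≤ B} ∩ F} ≤
      ENNReal.ofReal (Real.exp (-e) / 2) +
        ENNReal.ofReal (Real.exp (s ^ 2 * B + e) / 2) * nullLaw k t F := by
  set T := {r | energy Q r x ≤ B} ∩ F
  set C := ENNReal.ofReal (Real.exp (s ^ 2 * B + e) / 2) with hC
  let L₂ : (Fin t → Fin k → ℝ) → ℝ≥0∞ :=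
    fun r => ENNReal.ofReal (likelihoodRatio Q ((2 : ℝ) • s • x) r)
  have meas_L₂ : Measurable L₂ := hQ.measurable_likelihoodRatio _
  have meas_T : MeasurableSet T :=
    (measurableSet_le (hQ.measurable_energy measurable_id measurable_const) measurable_const).inter
      hF
  calc stdGaussian (Fin N) {a | resp Q (a + s • x) ∈ T}
      = ∫⁻ r in T, ENNReal.ofReal (likelihoodRatio Q (s • x) r) ∂(nullLaw k t) :=
        hQ.stdGaussian_resp_add_mem (s • x) meas_T
    _ ≤ ∫⁻ r in T, (ENNReal.ofReal (Real.exp (-e) / 2) * L₂ r + C) ∂(nullLaw k t) := by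
        refine setLIntegral_mono' meas_T fun r hr => ?_
        have low_energy : energy Q r (s • x) ≤ s ^ 2 * B := by
          rw [energy_smul]
          exact mul_le_mul_of_nonneg_left hr.1 (sq_nonneg s)
        rw [hC, ← ENNReal.ofReal_mul (by positivity), ← ENNReal.ofReal_add
          (mul_nonneg (by positivity) (likelihoodRatio_pos _ _ _).le) (by positivity)]
        exact ENNReal.ofReal_le_ofReal (likelihoodRatio_le_of_energy_le low_energy e)
    _ = ENNReal.ofReal (Real.exp (-e) / 2) * ∫⁻ r in T, L₂ r ∂(nullLaw k t) +
          C * nullLaw k t T := by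
        rw [lintegral_add_right _ measurable_const, lintegral_const_mul _ meas_L₂,
          setLIntegral_const]
    _ ≤ ENNReal.ofReal (Real.exp (-e) / 2) * 1 + C * nullLaw k t F := by
        gcongr
        · exact (setLIntegral_le_lintegral _ _).trans_eq (hQ.lintegral_likelihoodRatio _)
        · exact Set.inter_subset_right
    _ = _ := by rw [mul_one]

end SecondMoment

section EnergyGrowth

variable {Ω : Type*} [MeasurableSpace Ω] {W : Measure Ω} [IsProbabilityMeasure W]
  {X : Ω → Fin N → ℝ} {S : Set Ω} {β τ : ℝ}

lemma Valid.measurableSet_sqNorm_lastQuery_gt {Q : QueryMaps N k (t + 1)} (hQ : Q.Valid)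
    (hX : Measurable X) (hS : MeasurableSet S) (b : ℝ) :
    MeasurableSet {p : (Fin t → Fin k → ℝ) × Ω |
      p.2 ∈ S ∧ b < sqNorm (lastQuery Q p.1 *ᵥ X p.2)} :=
  (measurable_snd hS).inter (measurableSet_lt measurable_const (measurable_sqNorm.comp
    (hQ.measurable_lastQuery_mulVec measurable_fst (hX.comp measurable_snd))))

lemma Valid.nullLaw_prod_sqNorm_lastQuery_gt_le {Q : QueryMaps N k (t + 1)} (hQ : Q.Valid)
    (hX : Measurable X) (hS : MeasurableSet S) (tail : HasProjectionTail W X k S β τ) (b : ℝ) :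
    ((nullLaw k t).prod W) {p | p.2 ∈ S ∧ b < sqNorm (lastQuery Q p.1 *ᵥ X p.2)} ≤
      ENNReal.ofReal (Real.exp (-(b - β) / τ)) := by
  rw [Measure.prod_apply (hQ.measurableSet_sqNorm_lastQuery_gt hX hS b)]
  refine (lintegral_mono fun r => tail _ (hQ.lastQuery_mul_transpose r) b).trans_eq ?_
  rw [lintegral_const, measure_univ, mul_one]

/-- Comparing with the null law, where the last query does not depend on the signal, costs a factor
`exp (s ^ 2 * B)`. -/
lemma Valid.stdGaussian_prod_sqNorm_lastQuery_gt_le {Q : QueryMaps N k (t + 1)} (hQ : Q.Valid)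
    (hX : Measurable X) (hS : MeasurableSet S) (tail : HasProjectionTail W X k S β τ) (hτ : 0 < τ)
    (s B e : ℝ) :
    ((stdGaussian (Fin N)).prod W) {p |
        energy (QueryMaps.dropLast Q) (resp (QueryMaps.dropLast Q) (p.1 + s • X p.2)) (X p.2) ≤ B ∧
        p.2 ∈ S ∧ β + τ * (s ^ 2 * B + 2 * e) <
          sqNorm (lastQuery Q (resp (QueryMaps.dropLast Q) (p.1 + s • X p.2)) *ᵥ X p.2)} ≤
      ENNReal.ofReal (Real.exp (-e)) := by
  set Q' := QueryMaps.dropLast Q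
  set b := β + τ * (s ^ 2 * B + 2 * e) with hb
  let F : Set ((Fin t → Fin k → ℝ) × Ω) := {p | p.2 ∈ S ∧ b < sqNorm (lastQuery Q p.1 *ᵥ X p.2)}
  let E : Set ((Fin N → ℝ) × Ω) := {p | energy Q' (resp Q' (p.1 + s • X p.2)) (X p.2) ≤ B ∧
    (resp Q' (p.1 + s • X p.2), p.2) ∈ F}
  have meas_F : MeasurableSet F := hQ.measurableSet_sqNorm_lastQuery_gt hX hS b
  have meas_resp : Measurable fun p : (Fin N → ℝ) × Ω => resp Q' (p.1 + s • X p.2) :=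
    hQ.dropLast.measurable_resp.comp (by fun_prop)
  have meas_E : MeasurableSet E :=
    (measurableSet_le (hQ.dropLast.measurable_energy meas_resp (hX.comp measurable_snd))
      measurable_const).inter ((meas_resp.prodMk measurable_snd) meas_F)
  have null_bound : ((nullLaw k t).prod W) F ≤
      ENNReal.ofReal (Real.exp (-(s ^ 2 * B + 2 * e))) := by
    refine (hQ.nullLaw_prod_sqNorm_lastQuery_gt_le hX hS tail b).trans_eq ?_
    rw [hb, add_sub_cancel_left, ← mul_neg, mul_div_cancel_left₀ _ hτ.ne']
  calc ((stdGaussian (Fin N)).prod W) E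
      = ∫⁻ w, stdGaussian (Fin N) {a | (a, w) ∈ E} ∂W := Measure.prod_apply_symm meas_E
    _ ≤ ∫⁻ w, (ENNReal.ofReal (Real.exp (-e) / 2) + ENNReal.ofReal (Real.exp (s ^ 2 * B + e) / 2) *
          nullLaw k t ((fun r => (r, w)) ⁻¹' F)) ∂W :=
        lintegral_mono fun w => hQ.dropLast.stdGaussian_resp_add_smul_mem_le s (X w) B e
          (measurable_prodMk_right meas_F)
    _ = ENNReal.ofReal (Real.exp (-e) / 2) +
          ENNReal.ofReal (Real.exp (s ^ 2 * B + e) / 2) * ((nullLaw k t).prod W) F := by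
        rw [lintegral_add_left measurable_const, lintegral_const, measure_univ, mul_one,
          lintegral_const_mul _ (measurable_measure_prodMk_right meas_F),
          Measure.prod_apply_symm meas_F]
    _ ≤ ENNReal.ofReal (Real.exp (-e) / 2) + ENNReal.ofReal (Real.exp (s ^ 2 * B + e) / 2) *
          ENNReal.ofReal (Real.exp (-(s ^ 2 * B + 2 * e))) := by gcongr
    _ = ENNReal.ofReal (Real.exp (-e)) := by
        rw [← ENNReal.ofReal_mul (by positivity),
          ← ENNReal.ofReal_add (by positivity) (by positivity), div_mul_eq_mul_div, ← Real.exp_add]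
        ring_nf

theorem Valid.stdGaussian_prod_energy_gt_le {Q : QueryMaps N k t} (hQ : Q.Valid)
    (hX : Measurable X) (hS : MeasurableSet S) (tail : HasProjectionTail W X k S β τ) (hτ : 0 < τ)
    (s : ℝ) {B e : ℕ → ℝ} (hB₀ : 0 ≤ B 0)
    (hB : ∀ j, B j + (β + τ * (s ^ 2 * B j + 2 * e j)) ≤ B (j + 1)) :
    ((stdGaussian (Fin N)).prod W)
        {p | p.2 ∈ S ∧ B t < energy Q (resp Q (p.1 + s • X p.2)) (X p.2)} ≤
      ∑ j ∈ Finset.range t, ENNReal.ofReal (Real.exp (-e j)) := by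
  induction t with
  | zero => simp [energy, hB₀.not_gt]
  | succ t ih =>
    rw [Finset.sum_range_succ]
    refine (measure_mono ?_).trans ((measure_union_le _ _).trans (add_le_add (ih hQ.dropLast)
      (hQ.stdGaussian_prod_sqNorm_lastQuery_gt_le hX hS tail hτ s (B t) (e t))))
    rintro p ⟨hpS, exceeds⟩
    rw [energy_resp_succ] at exceeds
    rcases lt_or_ge (B t) (energy (QueryMaps.dropLast Q)
      (resp (QueryMaps.dropLast Q) (p.1 + s • X p.2)) (X p.2)) with early | low
    · exact Or.inl ⟨hpS, early⟩
    · exact Or.inr ⟨low, hpS, by linarith [hB t]⟩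

end EnergyGrowth

end QueryMaps

section Parameters

lemma measurePreserving_vec (n : ℕ) :
    MeasurePreserving (fun G : Fin n → Fin n → ℝ => vec n (of G))
      (stdGaussianMat n) (stdGaussian (Fin (n * n))) := by
  have flatten : MeasurePreserving (MeasurableEquiv.curry (Fin n) (Fin n) ℝ).symm
      (stdGaussianMat n) (stdGaussian (Fin n × Fin n)) := by
    refine ⟨MeasurableEquiv.measurable _, ?_⟩
    have curry_symm := Measure.infinitePi_map_curry_symm
      fun _ _ : Fin n => gaussianReal 0 1
    simp only [Measure.infinitePi_eq_pi] at curry_symm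
    exact curry_symm
  have reindex := measurePreserving_piCongrLeft (fun _ : Fin (n * n) => gaussianReal 0 1)
    finProdFinEquiv
  have vec_eq : (fun G : Fin n → Fin n → ℝ => vec n (of G)) =
      MeasurableEquiv.piCongrLeft (fun _ => ℝ) finProdFinEquiv ∘
        (MeasurableEquiv.curry (Fin n) (Fin n) ℝ).symm := by
    ext G i
    obtain ⟨p, rfl⟩ := finProdFinEquiv.surjective i
    rw [Function.comp_apply, MeasurableEquiv.coe_piCongrLeft, Equiv.piCongrLeft_apply_apply]
    simp only [_root_.vec, Equiv.symm_apply_apply, of_apply]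
    rfl
  rw [vec_eq]
  exact reindex.comp flatten

lemma hasProjectionTail_tensor {n : ℕ} (hn : 0 < n) (k : ℕ) :
    HasProjectionTail ((stdGaussian (Fin n)).prod (stdGaussian (Fin n)))
      (fun w => tensor w.1 w.2) k {w | sqNorm w.2 ≤ 20 * n} (4 * k) (80 * n) := by
  intro A hA b
  have hn' : (0 : ℝ) < n := Nat.cast_pos.2 hn
  refine (stdGaussian_prod_sqNorm_mulVec_tensor_gt_le hA (R := 20 * n) (by positivity)
    (by linarith) b).trans_eq ?_
  rw [Fintype.card_fin, ← mul_assoc]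
  norm_num

lemma exp_neg_nat_le_half_pow (m : ℕ) : Real.exp (-m) ≤ (1 / 2) ^ m := by
  rw [← mul_neg_one, Real.exp_nat_mul]
  exact pow_le_pow_left₀ (Real.exp_pos _).le (by linarith [Real.exp_neg_one_lt_half]) m

lemma sum_exp_neg_add_four_le (t : ℕ) :
    ∑ j ∈ Finset.range t, Real.exp (-((j : ℝ) + 4)) ≤ 1 / 8 := by
  calc ∑ j ∈ Finset.range t, Real.exp (-((j : ℝ) + 4))
      ≤ ∑ j ∈ Finset.range t, (1 / 2 : ℝ) ^ j * (1 / 2) ^ 4 :=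
        Finset.sum_le_sum fun j _ => by
          rw [← pow_add]
          exact_mod_cast exp_neg_nat_le_half_pow (j + 4)
    _ ≤ 2 * (1 / 2) ^ 4 := by
        rw [← Finset.sum_mul]
        gcongr
        exact sum_geometric_two_le t
    _ = 1 / 8 := by norm_num

lemma stdGaussian_sqNorm_gt_twenty_mul_le {n : ℕ} (hn : 0 < n) :
    stdGaussian (Fin n) {v | 20 * n < sqNorm v} ≤ ENNReal.ofReal (1 / 16) := by
  have hn' : (1 : ℝ) ≤ n := Nat.one_le_cast.2 hn
  refine (stdGaussian_sqNorm_gt_le _).trans (ENNReal.ofReal_le_ofReal ?_)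
  calc Real.exp (-(20 * n - 2 * Fintype.card (Fin n)) / 4)
      ≤ Real.exp (-(4 : ℕ)) := by
        rw [Fintype.card_fin]
        exact Real.exp_le_exp.2 (by push_cast; linarith)
    _ ≤ (1 / 2) ^ 4 := exp_neg_nat_le_half_pow 4
    _ = 1 / 16 := by norm_num

/-- The growth rate of the budgets `k * (growthFactor α ^ j - 1)` for the squared projection onto
the queries of the first `j` rounds, large enough to absorb the increment of one round. -/
def growthFactor (α : ℝ) : ℝ := 1000 * (1 + α ^ 2)

lemma one_le_growthFactor (α : ℝ) : 1 ≤ growthFactor α := by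
  unfold growthFactor
  nlinarith [sq_nonneg α]

lemma budget_add_le_budget_succ {n k : ℕ} (hn : 0 < n) (hk : n ≤ k) (α : ℝ) (j : ℕ) :
    k * (growthFactor α ^ j - 1) + (4 * k + 80 * n * ((α / √n) ^ 2 *
      (k * (growthFactor α ^ j - 1)) + 2 * ((j : ℝ) + 4))) ≤
        k * (growthFactor α ^ (j + 1) - 1) := by
  have hn' : (0 : ℝ) < n := Nat.cast_pos.2 hn
  have hk' : (n : ℝ) ≤ k := Nat.cast_le.2 hk
  set D := growthFactor α with hD
  set P := D ^ j
  have D_sub : 999 ≤ D - 1 - 80 * α ^ 2 := by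
    rw [hD, growthFactor]
    nlinarith [sq_nonneg α]
  have bernoulli : 1 + (j : ℝ) * 999 ≤ P := by
    have h := one_add_mul_le_pow (a := D - 1) (by linarith [one_le_growthFactor α]) j
    rw [add_sub_cancel] at h
    nlinarith [sq_nonneg α, (Nat.cast_nonneg j : (0 : ℝ) ≤ j)]
  have strength : 80 * n * (α / √n) ^ 2 = 80 * α ^ 2 := by
    rw [div_pow, Real.sq_sqrt hn'.le]
    field_simp
  have per_round : 4 + 160 * ((j : ℝ) + 4) ≤ (D - 1 - 80 * α ^ 2) * P := by
    nlinarith [(Nat.cast_nonneg j : (0 : ℝ) ≤ j)]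
  calc k * (P - 1) + (4 * k + 80 * n * ((α / √n) ^ 2 * (k * (P - 1)) + 2 * ((j : ℝ) + 4)))
      = k * (P - 1) + 4 * k + 80 * n * (α / √n) ^ 2 * (k * (P - 1)) +
          n * (160 * ((j : ℝ) + 4)) := by ring
    _ ≤ k * (P - 1) + 4 * k + 80 * α ^ 2 * (k * P) + k * (160 * ((j : ℝ) + 4)) := by
        rw [strength]
        gcongr
        linarith
    _ = k * (P - 1) + 80 * α ^ 2 * (k * P) + k * (4 + 160 * ((j : ℝ) + 4)) := by ring
    _ ≤ k * (P - 1) + 80 * α ^ 2 * (k * P) + k * ((D - 1 - 80 * α ^ 2) * P) := by gcongr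
    _ = k * (D ^ (j + 1) - 1) := by ring

lemma growthFactor_pow_le {n k t : ℕ} (hn : 0 < n) (hk : 0 < k) {α : ℝ}
    (ht : (t : ℝ) ≤ Real.log ((n : ℝ) ^ 2 / k) / (2 * Real.log (growthFactor α))) :
    k * growthFactor α ^ (2 * t) ≤ (n : ℝ) ^ 2 := by
  have hk' : (0 : ℝ) < k := Nat.cast_pos.2 hk
  have D_gt_one : 1 < growthFactor α := by
    unfold growthFactor
    linarith [sq_nonneg α]
  have log_pos : 0 < 2 * Real.log (growthFactor α) := by linarith [Real.log_pos D_gt_one]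
  rw [← le_div_iff₀' hk', ← Real.log_le_log_iff (by positivity) (by positivity), Real.log_pow]
  push_cast
  linarith [(le_div_iff₀ log_pos).1 ht]

lemma final_budget_le {n k t : ℕ} (hn : 0 < n) (hk : 0 < k) {α : ℝ}
    (ht : (t : ℝ) ≤ Real.log ((n : ℝ) ^ 2 / k) / (2 * Real.log (growthFactor α))) :
    k * (growthFactor α ^ t - 1) ≤ (n : ℝ) ^ 2 / 100 := by
  rcases t.eq_zero_or_pos with rfl | t_pos
  · rw [pow_zero, sub_self, mul_zero]
    positivity
  · have D_ge : 100 ≤ growthFactor α := by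
      unfold growthFactor
      linarith [sq_nonneg α]
    have pow_ge : 100 ≤ growthFactor α ^ t := D_ge.trans (le_self_pow₀ (by linarith) t_pos.ne')
    have double : 100 * (k * (growthFactor α ^ t - 1)) ≤ k * growthFactor α ^ (2 * t) :=
      calc 100 * (k * (growthFactor α ^ t - 1)) ≤ 100 * (k * growthFactor α ^ t) := by
            gcongr
            exact sub_le_self _ zero_le_one
        _ ≤ growthFactor α ^ t * (k * growthFactor α ^ t) := by gcongr
        _ = k * growthFactor α ^ (2 * t) := by ring
    linarith [growthFactor_pow_le hn hk ht]

/-- The exponent `6` comes from `1000 * (1 + α ^ 2) ≤ α ^ 6` for `10 ≤ α`. -/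
lemma log_ratio_le_of_ten_le {n t : ℕ} (hn : 3 ≤ n) {α L : ℝ} (hα : 10 ≤ α)
    (ht : (t : ℝ) ≤ 1 / 12 * L / (Real.log (Real.log n) + Real.log α)) :
    (t : ℝ) ≤ L / (2 * Real.log (growthFactor α)) := by
  have loglog_nonneg : 0 ≤ Real.log (Real.log n) := by
    have three_le : (3 : ℝ) ≤ n := Nat.cast_le.2 hn
    refine Real.log_nonneg ((Real.le_log_iff_exp_le (by linarith)).2 ?_)
    linarith [Real.exp_one_lt_three]
  have log_α_pos : 0 < Real.log α := Real.log_pos (by linarith)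
  have D_gt_one : 1 < growthFactor α := by
    unfold growthFactor
    linarith [sq_nonneg α]
  have log_D_pos := Real.log_pos D_gt_one
  have log_D_le : Real.log (growthFactor α) ≤ 6 * Real.log α := by
    have D_le : growthFactor α ≤ α ^ 6 := by
      unfold growthFactor
      nlinarith [pow_le_pow_left₀ (by norm_num) hα 2, pow_le_pow_left₀ (by norm_num) hα 4]
    calc Real.log (growthFactor α) ≤ Real.log (α ^ 6) := Real.log_le_log (by linarith) D_le
      _ = 6 * Real.log α := by rw [Real.log_pow]; norm_num
  have t_nonneg : (0 : ℝ) ≤ t := Nat.cast_nonneg t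
  rw [le_div_iff₀ (by linarith)] at ht ⊢
  nlinarith [mul_le_mul_of_nonneg_left log_D_le t_nonneg, mul_nonneg t_nonneg loglog_nonneg]

end Parameters

section RankOnePlant

variable {n k t : ℕ}

lemma QueryMaps.Valid.stdGaussian_prod_energy_tensor_gt_le (hn : 0 < n) (hk : n ≤ k) (α : ℝ)
    {Q : QueryMaps (n * n) k t} (hQ : Q.Valid) :
    ((stdGaussian (Fin (n * n))).prod ((stdGaussian (Fin n)).prod (stdGaussian (Fin n))))
        {p | k * (growthFactor α ^ t - 1) <
          energy Q (resp Q (p.1 + (α / √n) • tensor p.2.1 p.2.2)) (tensor p.2.1 p.2.2)} ≤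
      ENNReal.ofReal (1 / 5) := by
  set P := (stdGaussian (Fin (n * n))).prod ((stdGaussian (Fin n)).prod (stdGaussian (Fin n)))
  let long : Set ((Fin (n * n) → ℝ) × (Fin n → ℝ) × (Fin n → ℝ)) := {p | 20 * n < sqNorm p.2.2}
  let heavy : Set ((Fin (n * n) → ℝ) × (Fin n → ℝ) × (Fin n → ℝ)) :=
    {p | sqNorm p.2.2 ≤ 20 * n ∧ k * (growthFactor α ^ t - 1) <
      energy Q (resp Q (p.1 + (α / √n) • tensor p.2.1 p.2.2)) (tensor p.2.1 p.2.2)}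
  have long_le : P long ≤ ENNReal.ofReal (1 / 16) := by
    have long_eq : long = Set.univ ×ˢ Set.univ ×ˢ {v : Fin n → ℝ | 20 * n < sqNorm v} := by
      ext p
      simp [long]
    rw [long_eq, Measure.prod_prod, Measure.prod_prod, measure_univ, measure_univ, one_mul, one_mul]
    exact stdGaussian_sqNorm_gt_twenty_mul_le hn
  have heavy_le : P heavy ≤ ENNReal.ofReal (1 / 8) := by
    have budget_zero : (0 : ℝ) ≤ k * (growthFactor α ^ 0 - 1) := by
      rw [pow_zero, sub_self, mul_zero]
    have growth := hQ.stdGaussian_prod_energy_gt_le (B := fun j => k * (growthFactor α ^ j - 1))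
      (e := fun j => (j : ℝ) + 4) (by fun_prop)
      (measurableSet_le (by fun_prop) measurable_const) (hasProjectionTail_tensor hn k)
      (by positivity) (α / √n) budget_zero (budget_add_le_budget_succ hn hk α)
    refine growth.trans ?_
    rw [← ENNReal.ofReal_sum_of_nonneg fun _ _ => (Real.exp_pos _).le]
    exact ENNReal.ofReal_le_ofReal (sum_exp_neg_add_four_le t)
  calc P _ ≤ P (long ∪ heavy) :=
        measure_mono fun p hp =>
          (lt_or_ge (20 * (n : ℝ)) (sqNorm p.2.2)).imp id fun short => ⟨short, hp⟩
    _ ≤ ENNReal.ofReal (1 / 16) + ENNReal.ofReal (1 / 8) :=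
        (measure_union_le _ _).trans (add_le_add long_le heavy_le)
    _ ≤ ENNReal.ofReal (1 / 5) := by
        rw [← ENNReal.ofReal_add (by norm_num) (by norm_num)]
        exact ENNReal.ofReal_le_ofReal (by norm_num)

theorem QueryMaps.Valid.le_stdGaussianMat_prod_energy_tensor_le (hn : 0 < n) (hk : n ≤ k) (α : ℝ)
    {Q : QueryMaps (n * n) k t} (hQ : Q.Valid) :
    (4 / 5 : ℝ≥0∞) ≤
      ((stdGaussianMat n).prod ((stdGaussian (Fin n)).prod (stdGaussian (Fin n))))
        {p | sqNorm (runMat Q (vec n (of p.1) + (α / √n) • tensor p.2.1 p.2.2) *ᵥ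
          tensor p.2.1 p.2.2) ≤ k * (growthFactor α ^ t - 1)} := by
  let high : Set ((Fin (n * n) → ℝ) × (Fin n → ℝ) × (Fin n → ℝ)) :=
    {p | k * (growthFactor α ^ t - 1) <
      energy Q (resp Q (p.1 + (α / √n) • tensor p.2.1 p.2.2)) (tensor p.2.1 p.2.2)}
  have meas_high : MeasurableSet high :=
    measurableSet_lt measurable_const
      (hQ.measurable_energy (hQ.measurable_resp.comp (by fun_prop)) (by fun_prop))
  have vec_preserves := (measurePreserving_vec n).prod
    (MeasurePreserving.id ((stdGaussian (Fin n)).prod (stdGaussian (Fin n))))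
  have four_fifths : (4 / 5 : ℝ≥0∞) = 1 - ENNReal.ofReal (1 / 5) := by
    rw [ENNReal.ofReal_div_of_pos (by norm_num)]
    refine ENNReal.eq_sub_of_add_eq (by simp) ?_
    rw [ENNReal.ofReal_one, ENNReal.ofReal_ofNat, ENNReal.div_add_div_same]
    norm_num
    exact ENNReal.div_self (by norm_num) (by norm_num)
  calc (4 / 5 : ℝ≥0∞) = 1 - ENNReal.ofReal (1 / 5) := four_fifths
    _ ≤ 1 - _ := tsub_le_tsub_left (hQ.stdGaussian_prod_energy_tensor_gt_le hn hk α) 1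
    _ = _ := (prob_compl_eq_one_sub meas_high).symm
    _ = _ := (vec_preserves.measure_preimage meas_high.compl.nullMeasurableSet).symm
    _ ≤ _ := measure_mono fun p hp => by
      rw [Set.mem_ofPred_eq, sqNorm_runMat_mulVec]
      exact not_lt.1 hp

theorem rank_one_plant_small_projection_general (hn : 0 < n) (hk : n ≤ k) (α : ℝ)
    {Q : QueryMaps (n * n) k t} (hQ : Q.Valid)
    (ht : (t : ℝ) ≤ Real.log ((n : ℝ) ^ 2 / k) / (2 * Real.log (growthFactor α))) :
    (4 / 5 : ℝ≥0∞) ≤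
      ((stdGaussianMat n).prod ((stdGaussian (Fin n)).prod (stdGaussian (Fin n))))
        {p | sqNorm ((QueryMaps.runMat Q (vec n (of p.1) + (α / √n) • tensor p.2.1 p.2.2)) *ᵥ
          tensor p.2.1 p.2.2) ≤ (n : ℝ) ^ 2 / 100} :=
  (hQ.le_stdGaussianMat_prod_energy_tensor_le hn hk α).trans
    (measure_mono fun _ hp => hp.trans (final_budget_le hn (hn.trans_le hk) ht))

end RankOnePlant

/-- For few rounds, the squared projection of the plant `u ⊗ v` onto the query space
stays small with probability at least `4/5`. -/
theorem rank_one_plant_small_projection :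
    ∃ (c : ℝ) (n₀ : ℕ), 0 < c ∧
      ∀ (n k t : ℕ) (α : ℝ), n₀ ≤ n → n ≤ k → 10 ≤ α →
      ∀ Q : QueryMaps (n * n) k t, Q.Valid →
      (t : ℝ) ≤ c * Real.log ((n : ℝ) ^ 2 / k) /
          (Real.log (Real.log n) + Real.log α) →
      (4 / 5 : ℝ≥0∞) ≤
        ((stdGaussianMat n).prod ((stdGaussian (Fin n)).prod (stdGaussian (Fin n))))
          {p | sqNorm ((QueryMaps.runMat Q
                  (vec n (Matrix.of p.1) +
                    (α / Real.sqrt n) • tensor p.2.1 p.2.2)).mulVec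
                (tensor p.2.1 p.2.2))
              ≤ (n : ℝ) ^ 2 / 100} := by
  refine ⟨1 / 12, 3, by norm_num, fun n k t α hn hk hα Q hQ ht => ?_⟩
  exact rank_one_plant_small_projection_general (by lia) hk α hQ (log_ratio_le_of_ten_le hn hα ht)

end
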